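/- (Convergence of the inner fixed-point iteration) Let N ≥ 1, k > 0, b a nonzero real, and let C₀ be a constant such that ‖∂_x ψ‖ ≤ C₀ N ‖ψ‖ for all ψ ∈ S_N. Let Y ∈ S_N be real-valued, let Z* ∈ S_N satisfy Z* = Y + (kb/2) F(Z*), and define the iteration Z₀ = Y and, for ν ≥ 0, Z_{ν+1} ∈ S_N the (unique) solution of (I + (kb/2)∂_x³) Z_{ν+1} = Y − (kb/2) P_N ∂_x( Z_ν²/2 ). Suppose |Z*|_∞ ≤ R and |Z_ν|_∞ ≤ R + 1 for all ν ≥ 0, and set Γ = (C₀/2) k |b| N (R + 1). If Γ < 1, then ‖Z* − Z_ν‖ ≤ Γ^ν ‖Z* − Z₀‖ for all ν ≥ 0; in particular Z_ν converges to Z* in L² as ν → ∞. -/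

import Mathlib

noncomputable section

namespace KdVSpec

/-- The L² inner product of two real-valued functions on `(-π, π)`. -/
def L2inner (u v : ℝ → ℝ) : ℝ := ∫ x in (-Real.pi)..Real.pi, u x * v x

/-- The L² norm of a real-valued function on `(-π, π)`. -/
def L2norm (u : ℝ → ℝ) : ℝ := Real.sqrt (∫ x in (-Real.pi)..Real.pi, (u x)^2)

/-- The sup norm of a real-valued function on `[-π, π]`. -/
def LinfNorm (u : ℝ → ℝ) : ℝ := sSup ((fun x => |u x|) '' Set.Icc (-Real.pi) Real.pi)

/-- The `W^{1,∞}` norm `‖v‖_{1,∞} = |v|_∞ + |∂ₓ v|_∞`. -/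
def norm1inf (u : ℝ → ℝ) : ℝ := LinfNorm u + LinfNorm (deriv u)

/-- The `k`-th Fourier coefficient of a (2π-periodic) function on `(-π,π)`. -/
def fCoeff (u : ℝ → ℝ) (k : ℤ) : ℂ :=
  (1 / (2 * Real.pi)) *
    ∫ x in (-Real.pi)..Real.pi, Complex.exp (-(Complex.I * (k : ℂ) * (x : ℂ))) * (u x : ℂ)

/-- The periodic Sobolev norm of order `μ`. -/
def sobNorm (μ : ℝ) (u : ℝ → ℝ) : ℝ :=
  Real.sqrt (∑' k : ℤ, (1 + (k : ℝ)^2) ^ μ * ‖fCoeff u k‖^2)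

/-- `v` is a (real-valued) trigonometric polynomial of degree at most `N`,
i.e. a member of `S_N = span{e^{ikx} : |k| ≤ N}`. -/
def InSN (N : ℕ) (v : ℝ → ℝ) : Prop :=
  ∃ c : ℤ → ℂ, ∀ x : ℝ,
    (v x : ℂ) = ∑ k ∈ Finset.Icc (-(N : ℤ)) (N : ℤ), c k * Complex.exp (Complex.I * (k : ℂ) * (x : ℂ))

/-- The orthogonal L²-projection onto `S_N`, `P_N v = Σ_{|k|≤N} v̂(k) e^{ikx}`. -/
def PN (N : ℕ) (u : ℝ → ℝ) : ℝ → ℝ := fun x =>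
  (∑ k ∈ Finset.Icc (-(N : ℤ)) (N : ℤ), fCoeff u k * Complex.exp (Complex.I * (k : ℂ) * (x : ℂ))).re

/-- Spatial derivative `∂ₓ`. -/
def dx (u : ℝ → ℝ) : ℝ → ℝ := deriv u

/-- Third spatial derivative `∂ₓ³`. -/
def dx3 (u : ℝ → ℝ) : ℝ → ℝ := deriv (deriv (deriv u))

/-- The map `F(v) = -∂ₓ³ v - P_N(v ∂ₓ v)` on `S_N`. -/
def Fmap (N : ℕ) (v : ℝ → ℝ) : ℝ → ℝ := fun x =>
  -(dx3 v x) - PN N (fun y => v y * dx v y) x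

/-- `u` solves the periodic KdV equation `u_t + u u_x + u_{xxx} = 0` on the time set `I`
(with 2π-periodicity in space). -/
def IsKdVSolution (u : ℝ → ℝ → ℝ) (I : Set ℝ) : Prop :=
  (∀ t ∈ I, ∀ x : ℝ, u t (x + 2 * Real.pi) = u t x) ∧
  (∀ t ∈ I, ∀ x : ℝ,
    deriv (fun s => u s x) t + u t x * dx (u t) x + dx3 (u t) x = 0)

/-- `w` is the semidiscrete Fourier–Galerkin approximation (with initial value `P_N u₀`)
on the time set `I`: `w(t) ∈ S_N`, `w` is differentiable in time, `w(0) = P_N u₀` and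
`(∂_t w + w ∂ₓ w + ∂ₓ³ w, χ) = 0` for every `χ ∈ S_N`. -/
def SemidiscreteOn (N : ℕ) (u0 : ℝ → ℝ) (w : ℝ → ℝ → ℝ) (I : Set ℝ) : Prop :=
  (∀ t ∈ I, InSN N (w t)) ∧
  (∀ x : ℝ, ∀ t ∈ I, DifferentiableAt ℝ (fun s => w s x) t) ∧
  (∀ x : ℝ, w 0 x = PN N u0 x) ∧
  (∀ t ∈ I, ∀ χ : ℝ → ℝ, InSN N χ →
    L2inner (fun x => deriv (fun s => w s x) t + w t x * dx (w t) x + dx3 (w t) x) χ = 0)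


/-!
Both `Z*` and the iterates solve an equation with the same linear part, so `e = Z* - Z_{ν+1}`
satisfies `(I + (kb/2) ∂ₓ³) e = (kb/2) P_N ∂ₓ q` with `q = (Z_ν² - Z*²) / 2`. Pair this with `e`. The
dispersive term drops out because `∂ₓ³` is skew-symmetric on periodic functions, `P_N` drops out
because it is an orthogonal projection and `e ∈ S_N`, and one integration by parts gives
`‖e‖² = -(kb/2) (q, ∂ₓ e)`. By Cauchy–Schwarz and the inverse inequality, `‖e‖ ≤ (k|b|/2) C₀ N ‖q‖`,
while the factorisation of `q` bounds `‖q‖` by `(R + 1) ‖Z* - Z_ν‖`, so each step multiplies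
the error by at most `Γ`.
-/

/-- The complex trigonometric polynomial `∑_{|k| ≤ N} c k e^{ikx}`, so that `InSN N v` says that `v`
is a real-valued `trigSum N c`. -/
def trigSum (N : ℕ) (c : ℤ → ℂ) (x : ℝ) : ℂ :=
  ∑ k ∈ Finset.Icc (-(N : ℤ)) (N : ℤ), c k * Complex.exp (Complex.I * (k : ℂ) * (x : ℂ))

section

open Complex MeasureTheory Set
open scoped Real ComplexConjugate

variable {N : ℕ} {u v : ℝ → ℝ} {c : ℤ → ℂ}

lemma contDiff_trigSum (N : ℕ) (c : ℤ → ℂ) {n : WithTop ℕ∞} : ContDiff ℝ n (trigSum N c) := by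
  unfold trigSum
  have : ContDiff ℝ n (fun x : ℝ => (x : ℂ)) := ofRealCLM.contDiff
  fun_prop

lemma trigSum_periodic (N : ℕ) (c : ℤ → ℂ) : Function.Periodic (trigSum N c) (2 * π) := by
  intro x
  refine Finset.sum_congr rfl fun k _ => ?_
  rw [show I * (k : ℂ) * ((x + 2 * π : ℝ) : ℂ) = I * k * x + k * (2 * π * I) by push_cast; ring,
    exp_periodic.int_mul k]

lemma hasDerivAt_trigSum (N : ℕ) (c : ℤ → ℂ) (x : ℝ) :
    HasDerivAt (trigSum N c) (trigSum N (fun k => I * k * c k) x) x := by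
  refine HasDerivAt.fun_sum fun k _ => ?_
  have hlin : HasDerivAt (fun y : ℝ => I * (k : ℂ) * (y : ℂ)) (I * k) x := by
    simpa using (hasDerivAt_id x).ofReal_comp.const_mul (I * (k : ℂ))
  exact (hlin.cexp.const_mul (c k)).congr_deriv (by ring)

lemma trigSum_sub (N : ℕ) (c d : ℤ → ℂ) (x : ℝ) :
    trigSum N (c - d) x = trigSum N c x - trigSum N d x := by
  simp only [trigSum, Pi.sub_apply, sub_mul, Finset.sum_sub_distrib]

lemma conj_trigSum (N : ℕ) (c : ℤ → ℂ) (x : ℝ) :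
    conj (trigSum N c x) =
      ∑ k ∈ Finset.Icc (-(N : ℤ)) (N : ℤ), conj (c k) * exp (-(I * (k : ℂ) * (x : ℂ))) := by
  simp [trigSum, ← exp_conj]

lemma InSN.contDiff (hu : InSN N u) {n : WithTop ℕ∞} : ContDiff ℝ n u := by
  obtain ⟨c, hc⟩ := hu
  have hre : u = reCLM ∘ trigSum N c := funext fun x => by
    rw [Function.comp_apply, reCLM_apply, trigSum, ← hc, ofReal_re]
  exact hre ▸ reCLM.contDiff.comp (contDiff_trigSum N c)

lemma InSN.continuous (hu : InSN N u) : Continuous u :=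
  (hu.contDiff (n := 0)).continuous

lemma InSN.differentiable (hu : InSN N u) : Differentiable ℝ u :=
  (hu.contDiff (n := 1)).differentiable one_ne_zero

lemma InSN.periodic (hu : InSN N u) : Function.Periodic u (2 * π) := by
  obtain ⟨c, hc⟩ := hu
  exact fun x => ofReal_injective <| by
    simpa only [hc, trigSum] using trigSum_periodic N c x

protected lemma InSN.dx (hu : InSN N u) : InSN N (dx u) := by
  have hdiff := hu.differentiable
  obtain ⟨c, hc⟩ := hu
  have hsum : (fun x => (u x : ℂ)) = trigSum N c := funext hc
  refine ⟨fun k => I * k * c k, fun x => ?_⟩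
  exact (hsum ▸ (hdiff x).hasDerivAt.ofReal_comp).unique (hasDerivAt_trigSum N c x)

protected lemma InSN.sub (hu : InSN N u) (hv : InSN N v) : InSN N (u - v) := by
  obtain ⟨c, hc⟩ := hu
  obtain ⟨d, hd⟩ := hv
  refine ⟨c - d, fun x => ?_⟩
  rw [Pi.sub_apply, ofReal_sub, hc, hd]
  exact (trigSum_sub N c d x).symm

lemma inSN_const (N : ℕ) (a : ℝ) : InSN N (fun _ => a) :=
  ⟨Pi.single 0 (a : ℂ), fun x => by
    rw [Finset.sum_eq_single 0 (fun k _ hk => by simp [hk]) (by simp)]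
    simp⟩

lemma integral_exp_int_mul (m : ℤ) :
    ∫ x in (-π)..π, exp (I * (m : ℂ) * (x : ℂ)) = if m = 0 then 2 * (π : ℂ) else 0 := by
  split_ifs with hm
  · subst hm
    simp only [Int.cast_zero, mul_zero, zero_mul, exp_zero, intervalIntegral.integral_const,
      sub_neg_eq_add, real_smul, ofReal_add, mul_one]
    ring
  · have hm' : I * (m : ℂ) ≠ 0 := mul_ne_zero I_ne_zero (Int.cast_ne_zero.2 hm)
    have hperiod : exp (I * m * (π : ℂ)) = exp (I * m * ((-π : ℝ) : ℂ)) := by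
      rw [exp_eq_exp_iff_exists_int]
      exact ⟨m, by push_cast; ring⟩
    rw [integral_exp_mul_complex hm', hperiod, sub_self, zero_div]

lemma fCoeff_eq_of_eq_trigSum (hu : ∀ x, (u x : ℂ) = trigSum N c x) {k : ℤ}
    (hk : k ∈ Finset.Icc (-(N : ℤ)) (N : ℤ)) : fCoeff u k = c k := by
  have hexp (j : ℤ) : ∫ x in (-π)..π,
      exp (-(I * (k : ℂ) * (x : ℂ))) * (c j * exp (I * (j : ℂ) * (x : ℂ))) =
        if j = k then c j * (2 * π) else 0 := by
    have hcombine (x : ℝ) : exp (-(I * (k : ℂ) * (x : ℂ))) * (c j * exp (I * (j : ℂ) * (x : ℂ))) =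
        c j * exp (I * ((j - k : ℤ) : ℂ) * (x : ℂ)) := by
      rw [mul_left_comm, ← exp_add]
      push_cast
      ring_nf
    simp only [hcombine, intervalIntegral.integral_const_mul, integral_exp_int_mul, sub_eq_zero,
      mul_ite, mul_zero]
  simp only [fCoeff, hu, trigSum, Finset.mul_sum]
  rw [intervalIntegral.integral_finsetSum
    fun j _ => Continuous.intervalIntegrable (by fun_prop) _ _]
  simp only [hexp, Finset.sum_ite_eq', if_pos hk]
  have hpi : (π : ℂ) ≠ 0 := ofReal_ne_zero.2 Real.pi_ne_zero
  field_simp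

lemma fCoeff_neg (u : ℝ → ℝ) (k : ℤ) : fCoeff u (-k) = conj (fCoeff u k) := by
  simp only [fCoeff, intervalIntegral.integral_of_le (neg_le_self Real.pi_pos.le), map_mul,
    ← integral_conj, ← exp_conj]
  simp [map_ofNat]

lemma intervalIntegrable_exp_mul (hu : IntervalIntegrable u volume (-π) π) (k : ℤ) :
    IntervalIntegrable (fun x => exp (-(I * (k : ℂ) * (x : ℂ))) * (u x : ℂ)) volume (-π) π :=
  IntervalIntegrable.continuousOn_mul ⟨hu.1.ofReal, hu.2.ofReal⟩ (by fun_prop)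

lemma fCoeff_sub (hu : IntervalIntegrable u volume (-π) π) (hv : IntervalIntegrable v volume (-π) π)
    (k : ℤ) : fCoeff (u - v) k = fCoeff u k - fCoeff v k := by
  simp only [fCoeff, Pi.sub_apply, ofReal_sub, mul_sub]
  rw [intervalIntegral.integral_sub (intervalIntegrable_exp_mul hu k)
    (intervalIntegrable_exp_mul hv k), mul_sub]

-- The real part in `PN` loses nothing: the coefficients of a real function are conjugate-symmetric.
lemma ofReal_PN (N : ℕ) (u : ℝ → ℝ) (x : ℝ) : (PN N u x : ℂ) = trigSum N (fCoeff u) x := by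
  refine conj_eq_iff_re.1 ?_
  change conj (trigSum N (fCoeff u) x) = trigSum N (fCoeff u) x
  rw [conj_trigSum]
  refine Finset.sum_equiv (Equiv.neg ℤ) (fun k => ?_) fun k _ => ?_
  · simp only [Finset.mem_Icc, Equiv.neg_apply]
    omega
  · simp [fCoeff_neg]

lemma inSN_PN (N : ℕ) (u : ℝ → ℝ) : InSN N (PN N u) :=
  ⟨fCoeff u, ofReal_PN N u⟩

lemma fCoeff_PN (u : ℝ → ℝ) {k : ℤ} (hk : k ∈ Finset.Icc (-(N : ℤ)) (N : ℤ)) :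
    fCoeff (PN N u) k = fCoeff u k :=
  fCoeff_eq_of_eq_trigSum (ofReal_PN N u) hk

lemma PN_sub (N : ℕ) (hu : IntervalIntegrable u volume (-π) π)
    (hv : IntervalIntegrable v volume (-π) π) : PN N (u - v) = PN N u - PN N v := by
  funext x
  apply ofReal_injective
  rw [Pi.sub_apply, ofReal_sub, ofReal_PN, ofReal_PN, ofReal_PN, ← trigSum_sub]
  exact congrArg (trigSum N · x) (funext (fCoeff_sub hu hv))

lemma ofReal_L2inner_eq_sum_fCoeff (hu : IntervalIntegrable u volume (-π) π)
    (hv : ∀ x, (v x : ℂ) = trigSum N c x) :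
    (L2inner u v : ℂ) =
      2 * π * ∑ k ∈ Finset.Icc (-(N : ℤ)) (N : ℤ), fCoeff u k * conj (c k) := by
  have hint (x : ℝ) : ((u x * v x : ℝ) : ℂ) = ∑ k ∈ Finset.Icc (-(N : ℤ)) (N : ℤ),
      conj (c k) * (exp (-(I * (k : ℂ) * (x : ℂ))) * (u x : ℂ)) := by
    rw [ofReal_mul, ← conj_ofReal (v x), hv, conj_trigSum, Finset.mul_sum]
    exact Finset.sum_congr rfl fun k _ => by ring
  have hpi : (π : ℂ) ≠ 0 := ofReal_ne_zero.2 Real.pi_ne_zero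
  rw [L2inner, ← intervalIntegral.integral_ofReal]
  simp only [hint]
  rw [intervalIntegral.integral_finsetSum
    fun k _ => (intervalIntegrable_exp_mul hu k).const_mul _, Finset.mul_sum]
  refine Finset.sum_congr rfl fun k _ => ?_
  rw [intervalIntegral.integral_const_mul, fCoeff]
  field_simp

lemma L2inner_PN_left (hu : IntervalIntegrable u volume (-π) π) (hv : InSN N v) :
    L2inner (PN N u) v = L2inner u v := by
  obtain ⟨c, hc⟩ := hv
  apply ofReal_injective
  rw [ofReal_L2inner_eq_sum_fCoeff hu hc,
    ofReal_L2inner_eq_sum_fCoeff ((inSN_PN N u).continuous.intervalIntegrable _ _) hc]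
  exact congrArg _ <| Finset.sum_congr rfl fun k hk => by rw [fCoeff_PN u hk]

lemma L2inner_comm (u v : ℝ → ℝ) : L2inner u v = L2inner v u := by
  simp only [L2inner, mul_comm]

lemma L2norm_nonneg (u : ℝ → ℝ) : 0 ≤ L2norm u :=
  Real.sqrt_nonneg _

lemma L2norm_sq (u : ℝ → ℝ) : L2norm u ^ 2 = L2inner u u := by
  rw [L2norm, Real.sq_sqrt (intervalIntegral.integral_nonneg (neg_le_self Real.pi_pos.le)
    fun x _ => sq_nonneg (u x))]
  simp only [L2inner, sq]

lemma L2norm_const_one_pos : 0 < L2norm (fun _ => 1) := by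
  simp [L2norm, Real.pi_pos]

lemma memLp_two_of_continuous (hu : Continuous u) :
    MemLp u 2 (volume.restrict (Ioc (-π) π)) :=
  (memLp_two_iff_integrable_sq hu.aestronglyMeasurable).2 (hu.pow 2).integrableOn_Ioc

lemma abs_L2inner_le (hu : MemLp u 2 (volume.restrict (Ioc (-π) π)))
    (hv : MemLp v 2 (volume.restrict (Ioc (-π) π))) :
    |L2inner u v| ≤ L2norm u * L2norm v := by
  have hle : -π ≤ π := neg_le_self Real.pi_pos.le
  rw [← ENNReal.ofReal_ofNat] at hu hv
  calc |L2inner u v| ≤ ∫ x in (-π)..π, |u x * v x| :=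
        intervalIntegral.abs_integral_le_integral_abs hle
    _ ≤ L2norm u * L2norm v := by
        simpa [L2norm, intervalIntegral.integral_of_le hle, Real.sqrt_eq_rpow, abs_mul] using
          integral_mul_norm_le_Lp_mul_Lq Real.HolderConjugate.two_two hu hv

lemma L2norm_mul_le {M : ℝ} (hu : Continuous u) (hv : Continuous v) (hM : 0 ≤ M)
    (huM : ∀ x ∈ Icc (-π) π, |u x| ≤ M) : L2norm (u * v) ≤ M * L2norm v := by
  have hsq : ∫ x in (-π)..π, (u x * v x) ^ 2 ≤ M ^ 2 * ∫ x in (-π)..π, v x ^ 2 := by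
    rw [← intervalIntegral.integral_const_mul]
    refine intervalIntegral.integral_mono_on (neg_le_self Real.pi_pos.le)
      (Continuous.intervalIntegrable (by fun_prop) _ _)
      (Continuous.intervalIntegrable (by fun_prop) _ _) fun x hx => ?_
    rw [mul_pow]
    exact mul_le_mul_of_nonneg_right (sq_le_sq' (neg_le_of_abs_le (huM x hx))
      (le_of_abs_le (huM x hx))) (sq_nonneg _)
  calc L2norm (u * v) ≤ √(M ^ 2 * ∫ x in (-π)..π, v x ^ 2) := Real.sqrt_le_sqrt hsq
    _ = M * L2norm v := by rw [Real.sqrt_mul (sq_nonneg M), Real.sqrt_sq hM, L2norm]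

lemma abs_le_LinfNorm (hu : Continuous u) {x : ℝ} (hx : x ∈ Icc (-π) π) :
    |u x| ≤ LinfNorm u :=
  le_csSup (isCompact_Icc.image hu.abs).bddAbove ⟨x, hx, rfl⟩

lemma LinfNorm_nonneg (u : ℝ → ℝ) : 0 ≤ LinfNorm u :=
  Real.sSup_nonneg (forall_mem_image.2 fun x _ => abs_nonneg (u x))

lemma dx_half_sq (hu : Differentiable ℝ u) : dx (fun y => u y ^ 2 / 2) = fun y => u y * dx u y := by
  funext x
  refine (((hu x).hasDerivAt.pow 2).div_const 2).deriv.trans ?_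
  simp only [dx, Nat.cast_ofNat, Nat.add_one_sub_one, pow_one]
  ring

lemma dx_sub (hu : Differentiable ℝ u) (hv : Differentiable ℝ v) : dx (u - v) = dx u - dx v :=
  funext fun x => deriv_sub (hu x) (hv x)

lemma continuous_dx (hu : ContDiff ℝ 1 u) : Continuous (dx u) :=
  hu.continuous_deriv_one

lemma dx3_sub (hu : InSN N u) (hv : InSN N v) : dx3 (u - v) = dx3 u - dx3 v := by
  change dx (dx (dx (u - v))) = dx (dx (dx u)) - dx (dx (dx v))
  rw [dx_sub hu.differentiable hv.differentiable, dx_sub hu.dx.differentiable hv.dx.differentiable,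
    dx_sub hu.dx.dx.differentiable hv.dx.dx.differentiable]

lemma L2inner_dx_left (hu : ContDiff ℝ 1 u) (hv : ContDiff ℝ 1 v)
    (hup : Function.Periodic u (2 * π)) (hvp : Function.Periodic v (2 * π)) :
    L2inner (dx u) v = -L2inner u (dx v) := by
  have hparts := intervalIntegral.integral_mul_deriv_eq_deriv_mul (a := -π) (b := π)
    (fun x _ => (hu.differentiable one_ne_zero x).hasDerivAt)
    (fun x _ => (hv.differentiable one_ne_zero x).hasDerivAt)
    ((continuous_dx hu).intervalIntegrable _ _) ((continuous_dx hv).intervalIntegrable _ _)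
  have hends {w : ℝ → ℝ} (hw : Function.Periodic w (2 * π)) : w π = w (-π) := by
    rw [← hw (-π)]
    ring_nf
  rw [hends hup, hends hvp, sub_self, zero_sub] at hparts
  exact (neg_eq_iff_eq_neg.2 hparts).symm

protected lemma InSN.L2inner_dx_left (hu : InSN N u) (hv : InSN N v) :
    L2inner (dx u) v = -L2inner u (dx v) :=
  L2inner_dx_left hu.contDiff hv.contDiff hu.periodic hv.periodic

lemma InSN.L2inner_dx_self (hu : InSN N u) : L2inner (dx u) u = 0 := by
  have hskew := hu.L2inner_dx_left hu
  rw [L2inner_comm u] at hskew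
  exact self_eq_neg.1 hskew

lemma InSN.L2inner_dx3_self (hu : InSN N u) : L2inner (dx3 u) u = 0 := by
  change L2inner (dx (dx (dx u))) u = 0
  rw [hu.dx.dx.L2inner_dx_left hu, hu.dx.L2inner_dx_self, neg_zero]

section Resolvent

variable {e q : ℝ → ℝ} {l C : ℝ}

lemma L2norm_sq_eq_of_add_dx3_eq (he : InSN N e) (hq : ContDiff ℝ 1 q)
    (hqp : Function.Periodic q (2 * π)) (heq : ∀ x, e x + l * dx3 e x = l * PN N (dx q) x) :
    L2norm e ^ 2 = -l * L2inner q (dx e) := by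
  have hec : Continuous e := he.continuous
  have hec3 : Continuous (dx3 e) := he.dx.dx.dx.continuous
  calc L2norm e ^ 2 = L2inner e e + l * L2inner (dx3 e) e := by
        rw [L2norm_sq, he.L2inner_dx3_self, mul_zero, add_zero]
    _ = ∫ x in (-π)..π, (e x + l * dx3 e x) * e x := by
        simp only [L2inner, add_mul, mul_assoc]
        rw [intervalIntegral.integral_add (Continuous.intervalIntegrable (by fun_prop) _ _)
          (Continuous.intervalIntegrable (by fun_prop) _ _), intervalIntegral.integral_const_mul]
    _ = l * L2inner (PN N (dx q)) e := by
        simp only [heq, mul_assoc, intervalIntegral.integral_const_mul, L2inner]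
    _ = -l * L2inner q (dx e) := by
        rw [L2inner_PN_left ((continuous_dx hq).intervalIntegrable _ _) he,
          L2inner_dx_left hq he.contDiff hqp he.periodic, neg_mul_comm]

lemma inverse_inequality_const_nonneg
    (hC : ∀ ψ : ℝ → ℝ, InSN N ψ → L2norm (dx ψ) ≤ C * L2norm ψ) : 0 ≤ C :=
  nonneg_of_mul_nonneg_left ((L2norm_nonneg _).trans (hC _ (inSN_const N 1))) L2norm_const_one_pos

lemma L2norm_le_of_add_dx3_eq
    (hC : ∀ ψ : ℝ → ℝ, InSN N ψ → L2norm (dx ψ) ≤ C * L2norm ψ) (he : InSN N e)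
    (hq : ContDiff ℝ 1 q) (hqp : Function.Periodic q (2 * π))
    (heq : ∀ x, e x + l * dx3 e x = l * PN N (dx q) x) :
    L2norm e ≤ |l| * C * L2norm q := by
  have hsq : L2norm e * L2norm e ≤ |l| * C * L2norm q * L2norm e := by
    calc L2norm e * L2norm e = -l * L2inner q (dx e) := by
          rw [← sq, L2norm_sq_eq_of_add_dx3_eq he hq hqp heq]
      _ ≤ |l| * |L2inner q (dx e)| := by
          rw [← abs_neg l, ← abs_mul]
          exact le_abs_self _
      _ ≤ |l| * (L2norm q * (C * L2norm e)) := by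
          gcongr
          exact (abs_L2inner_le (memLp_two_of_continuous hq.continuous)
            (memLp_two_of_continuous he.dx.continuous)).trans
            (mul_le_mul_of_nonneg_left (hC e he) (L2norm_nonneg q))
      _ = |l| * C * L2norm q * L2norm e := by ring
  rcases (L2norm_nonneg e).eq_or_lt with he0 | hepos
  · rw [← he0]
    exact mul_nonneg (mul_nonneg (abs_nonneg l) (inverse_inequality_const_nonneg hC))
      (L2norm_nonneg q)
  · exact le_of_mul_le_mul_right hsq hepos

end Resolvent

section Iteration

variable {l C M : ℝ} {Y W Z Z' : ℝ → ℝ}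

lemma iteration_error_eq (hW : InSN N W) (hZ : InSN N Z) (hZ' : InSN N Z')
    (hWeq : ∀ x, W x = Y x + l * Fmap N W x)
    (hstep : ∀ x, Z' x + l * dx3 Z' x = Y x - l * PN N (dx (fun y => Z y ^ 2 / 2)) x) (x : ℝ) :
    (W - Z') x + l * dx3 (W - Z') x =
      l * PN N (dx ((fun y => Z y ^ 2 / 2) - fun y => W y ^ 2 / 2)) x := by
  have hsq {V : ℝ → ℝ} (hV : InSN N V) : ContDiff ℝ 1 (fun y => V y ^ 2 / 2) :=
    (hV.contDiff.pow 2).div_const 2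
  have hPN : PN N (dx ((fun y => Z y ^ 2 / 2) - fun y => W y ^ 2 / 2)) =
      PN N (dx (fun y => Z y ^ 2 / 2)) - PN N (dx (fun y => W y ^ 2 / 2)) := by
    rw [dx_sub ((hsq hZ).differentiable one_ne_zero) ((hsq hW).differentiable one_ne_zero),
      PN_sub N ((continuous_dx (hsq hZ)).intervalIntegrable _ _)
        ((continuous_dx (hsq hW)).intervalIntegrable _ _)]
  have hWx := hWeq x
  rw [Fmap, ← dx_half_sq hW.differentiable] at hWx
  rw [hPN, dx3_sub hW hZ']
  simp only [Pi.sub_apply]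
  linear_combination hWx - hstep x

lemma L2norm_half_sq_sub_half_sq_le (hZ : Continuous Z) (hW : Continuous W)
    (hZM : LinfNorm Z ≤ M) (hWM : LinfNorm W ≤ M) :
    L2norm ((fun y => Z y ^ 2 / 2) - fun y => W y ^ 2 / 2) ≤ M * L2norm (W - Z) := by
  have hfactor : (fun y => Z y ^ 2 / 2) - (fun y => W y ^ 2 / 2) =
      (fun y => -(Z y + W y) / 2) * (W - Z) := by
    funext x
    simp only [Pi.sub_apply, Pi.mul_apply]
    ring
  rw [hfactor]
  refine L2norm_mul_le (by fun_prop) (hW.sub hZ) ((LinfNorm_nonneg Z).trans hZM) fun x hx => ?_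
  have hZx := (abs_le_LinfNorm hZ hx).trans hZM
  have hWx := (abs_le_LinfNorm hW hx).trans hWM
  rw [abs_le] at hZx hWx ⊢
  constructor <;> linarith [hZx.1, hZx.2, hWx.1, hWx.2]

lemma L2norm_sub_iteration_step_le
    (hC : ∀ ψ : ℝ → ℝ, InSN N ψ → L2norm (dx ψ) ≤ C * L2norm ψ)
    (hW : InSN N W) (hZ : InSN N Z) (hZ' : InSN N Z') (hWM : LinfNorm W ≤ M) (hZM : LinfNorm Z ≤ M)
    (hWeq : ∀ x, W x = Y x + l * Fmap N W x)
    (hstep : ∀ x, Z' x + l * dx3 Z' x = Y x - l * PN N (dx (fun y => Z y ^ 2 / 2)) x) :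
    L2norm (W - Z') ≤ |l| * C * M * L2norm (W - Z) := by
  have hsmooth : ContDiff ℝ 1 ((fun y => Z y ^ 2 / 2) - fun y => W y ^ 2 / 2) :=
    ((hZ.contDiff.pow 2).div_const 2).sub ((hW.contDiff.pow 2).div_const 2)
  have hperiodic : Function.Periodic ((fun y => Z y ^ 2 / 2) - fun y => W y ^ 2 / 2) (2 * π) :=
    fun x => by simp only [Pi.sub_apply, hZ.periodic x, hW.periodic x]
  calc L2norm (W - Z')
      ≤ |l| * C * L2norm ((fun y => Z y ^ 2 / 2) - fun y => W y ^ 2 / 2) :=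
        L2norm_le_of_add_dx3_eq hC (hW.sub hZ') hsmooth hperiodic
          (iteration_error_eq hW hZ hZ' hWeq hstep)
    _ ≤ |l| * C * (M * L2norm (W - Z)) :=
        mul_le_mul_of_nonneg_left
          (L2norm_half_sq_sub_half_sq_le hZ.continuous hW.continuous hZM hWM)
          (mul_nonneg (abs_nonneg l) (inverse_inequality_const_nonneg hC))
    _ = |l| * C * M * L2norm (W - Z) := by ring

end Iteration

end

theorem inner_iteration_convergence_general
    {N : ℕ} {l C M : ℝ} (hC : ∀ ψ : ℝ → ℝ, InSN N ψ → L2norm (dx ψ) ≤ C * L2norm ψ)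
    {Y W : ℝ → ℝ} (hW : InSN N W) (hWeq : ∀ x, W x = Y x + l * Fmap N W x)
    (hWM : LinfNorm W ≤ M) {Z : ℕ → ℝ → ℝ} (hZ : ∀ ν, InSN N (Z ν))
    (hZrec : ∀ ν x, Z (ν + 1) x + l * dx3 (Z (ν + 1)) x
      = Y x - l * PN N (dx (fun y => Z ν y ^ 2 / 2)) x)
    (hZM : ∀ ν, LinfNorm (Z ν) ≤ M) :
    (∀ ν, L2norm (fun x => W x - Z ν x) ≤ (|l| * C * M) ^ ν * L2norm (fun x => W x - Z 0 x)) ∧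
    (|l| * C * M < 1 →
      Filter.Tendsto (fun ν => L2norm (fun x => W x - Z ν x)) Filter.atTop (nhds 0)) := by
  have hΓ : 0 ≤ |l| * C * M :=
    mul_nonneg (mul_nonneg (abs_nonneg l) (inverse_inequality_const_nonneg hC))
      ((LinfNorm_nonneg W).trans hWM)
  have hgeom (ν : ℕ) : L2norm (W - Z ν) ≤ (|l| * C * M) ^ ν * L2norm (W - Z 0) :=
    le_geom (u := fun ν => L2norm (W - Z ν)) hΓ ν fun n _ =>
      L2norm_sub_iteration_step_le hC hW (hZ n) (hZ (n + 1)) hWM (hZM n) hWeq (hZrec n)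
  refine ⟨hgeom, fun hlt => squeeze_zero (fun ν => L2norm_nonneg _) hgeom ?_⟩
  simpa only [zero_mul] using
    (tendsto_pow_atTop_nhds_zero_of_lt_one hΓ hlt).mul_const (L2norm (W - Z 0))

/-- convergence of the inner fixed-point iteration: the iterates
`Z_{ν+1}` of `(I + (kb/2)∂ₓ³) Z_{ν+1} = Y − (kb/2) P_N ∂ₓ(Z_ν²/2)` satisfy
`‖Z* − Z_ν‖ ≤ Γ^ν ‖Z* − Z₀‖` and converge to `Z*` in L², provided
`Γ = (C₀/2) k |b| N (R+1) < 1`. -/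
theorem inner_iteration_convergence
    (N : ℕ) (hN : 1 ≤ N) (k : ℝ) (hk : 0 < k) (b : ℝ) (hb : b ≠ 0)
    (C₀ : ℝ) (hC₀ : ∀ ψ : ℝ → ℝ, InSN N ψ → L2norm (dx ψ) ≤ C₀ * N * L2norm ψ)
    (R : ℝ)
    (Y : ℝ → ℝ) (hY : InSN N Y)
    (Zstar : ℝ → ℝ) (hZstar : InSN N Zstar)
    (hZstarEq : ∀ x : ℝ, Zstar x = Y x + (k * b / 2) * Fmap N Zstar x)
    (hZstarInf : LinfNorm Zstar ≤ R)
    (Z : ℕ → ℝ → ℝ) (hZ0 : ∀ x : ℝ, Z 0 x = Y x)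
    (hZSN : ∀ ν : ℕ, InSN N (Z ν))
    (hZrec : ∀ ν : ℕ, ∀ x : ℝ,
      Z (ν+1) x + (k * b / 2) * dx3 (Z (ν+1)) x
        = Y x - (k * b / 2) * PN N (dx (fun y => (Z ν y)^2 / 2)) x)
    (hZInf : ∀ ν : ℕ, LinfNorm (Z ν) ≤ R + 1)
    (Γ : ℝ) (hΓdef : Γ = (C₀ / 2) * k * |b| * N * (R + 1)) (hΓ : Γ < 1) :
    (∀ ν : ℕ, L2norm (fun x => Zstar x - Z ν x)
        ≤ Γ ^ ν * L2norm (fun x => Zstar x - Z 0 x)) ∧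
    Filter.Tendsto (fun ν : ℕ => L2norm (fun x => Zstar x - Z ν x))
      Filter.atTop (nhds 0) := by
  obtain rfl : Γ = |k * b / 2| * (C₀ * N) * (R + 1) := by
    rw [hΓdef, abs_div, abs_mul, abs_of_pos hk, abs_two]
    ring
  exact (inner_iteration_convergence_general hC₀ hZstar hZstarEq (hZstarInf.trans (by linarith))
    hZSN hZrec hZInf).imp_right (· hΓ)

end KdVSpec
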